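/- If X ⊆ 𝒜^∞ is a chain mixing shift space such that d̄_M^H(M_σ(X^M_n), M_σ(X)) → 0 as n → ∞, then X is d̄_M-stable. -/

import Mathlib

open MeasureTheory Filter Topology

namespace DbarPaper

variable {A : Type} [Fintype A] [DecidableEq A] [Inhabited A]
  [TopologicalSpace A] [DiscreteTopology A]
  [MeasurableSpace A] [MeasurableSingletonClass A]

/-- The shift map on the full shift `𝒜^∞ = ℕ → A`. -/
def shift : (ℕ → A) → (ℕ → A) := fun x n => x (n + 1)

/-- A shift space: a nonempty, closed, shift-invariant subset of the full shift. -/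
def ShiftSpace (X : Set (ℕ → A)) : Prop :=
  X.Nonempty ∧ IsClosed X ∧ ∀ x ∈ X, shift x ∈ X

/-- The word `w` appears in the sequence `x`. -/
def occursIn (w : List A) (x : ℕ → A) : Prop :=
  ∃ i : ℕ, w = List.ofFn (fun k : Fin w.length => x (i + (k : ℕ)))

/-- The language of a set `X`: all finite words appearing in points of `X`. -/
def lang (X : Set (ℕ → A)) : Set (List A) := {w | ∃ x ∈ X, occursIn w x}

/-- Words of length `n` in the language of `X`. -/
def langN (n : ℕ) (X : Set (ℕ → A)) : Set (List A) := {w | w ∈ lang X ∧ w.length = n}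

/-- The pseudometric `d̄` on the full shift. -/
noncomputable def dbar (x y : ℕ → A) : ℝ :=
  Filter.limsup
    (fun n => (((Finset.range n).filter (fun j => x j ≠ y j)).card : ℝ) / (n : ℝ))
    Filter.atTop

/-- Hausdorff "distance" between two sets induced by a `ℝ`-valued distance. -/
noncomputable def hausdist {Z : Type*} (d : Z → Z → ℝ) (P Q : Set Z) : ℝ :=
  max (⨆ p : P, ⨅ q : Q, d p q) (⨆ q : Q, ⨅ p : P, d p q)

/-- A probability measure is shift-invariant. -/
def invariantPM (μ : ProbabilityMeasure (ℕ → A)) : Prop :=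
  (μ : Measure (ℕ → A)).map shift = (μ : Measure (ℕ → A))

/-- `M_σ(X)`: shift-invariant Borel probability measures giving `X` full measure. -/
def Msigma (X : Set (ℕ → A)) : Set (ProbabilityMeasure (ℕ → A)) :=
  {μ | invariantPM μ ∧ μ X = 1}

/-- `ξ` is a joining of `μ` and `ν`: a `σ×σ`-invariant measure on the product with
marginals `μ` and `ν`. -/
def IsJoining (ξ : Measure ((ℕ → A) × (ℕ → A))) (μ ν : ProbabilityMeasure (ℕ → A)) : Prop :=
  ξ.map (Prod.map shift shift) = ξ ∧
  ξ.map Prod.fst = (μ : Measure (ℕ → A)) ∧ ξ.map Prod.snd = (ν : Measure (ℕ → A))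

/-- Ornstein's metric `d̄_M` on invariant measures. -/
noncomputable def dbarM (μ ν : ProbabilityMeasure (ℕ → A)) : ℝ :=
  sInf {r : ℝ | ∃ ξ : Measure ((ℕ → A) × (ℕ → A)),
    IsJoining ξ μ ν ∧ r = (ξ {p | p.1 0 ≠ p.2 0}).toReal}

/-- `d̄_M`-stability of a shift space (Austin). -/
def DbarMStable (X : Set (ℕ → A)) : Prop :=
  ∀ ε : ℝ, 0 < ε → ∃ U : Set (ProbabilityMeasure (ℕ → A)), IsOpen U ∧ Msigma X ⊆ U ∧
    ∀ ν ∈ U, invariantPM ν → ∃ μ ∈ Msigma X, dbarM μ ν < ε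

/-- The infinite concatenation of a sequence of (nonempty) words. -/
def concatSeq (w : ℕ → List A) : ℕ → A := fun n =>
  ((List.ofFn (fun i : Fin (n + 1) => w (i : ℕ))).flatten).getD n default

/-- The `d̄`-shadowing property. -/
def DbarShadowing (X : Set (ℕ → A)) : Prop :=
  ∀ ε : ℝ, 0 < ε → ∃ N : ℕ, 0 < N ∧ ∀ w : ℕ → List A,
    (∀ j, w j ∈ lang X) → (∀ j, N ≤ (w j).length) →
    ∃ x' ∈ X, dbar (concatSeq w) x' < ε

/-- `U_n(X)`: the union of cylinders of words of length `n` in the language of `X`. -/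
def cylNbhd (X : Set (ℕ → A)) (n : ℕ) : Set (ℕ → A) :=
  {x | List.ofFn (fun k : Fin n => x (k : ℕ)) ∈ lang X}

/-- The `n`-th (topological) Markov approximation of `X`: all sequences whose subwords of
length `n+1` belong to the language of `X`. -/
def markovApprox (X : Set (ℕ → A)) (n : ℕ) : Set (ℕ → A) :=
  {x | ∀ i : ℕ, List.ofFn (fun k : Fin (n + 1) => x (i + (k : ℕ))) ∈ lang X}

/-- Transitivity, in terms of the language. -/
def TransitiveShift (X : Set (ℕ → A)) : Prop :=
  ∀ u ∈ lang X, ∀ w ∈ lang X, ∃ v : List A, u ++ v ++ w ∈ lang X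

/-- Topological mixing, in terms of the language. -/
def MixingShift (X : Set (ℕ → A)) : Prop :=
  ∀ u ∈ lang X, ∀ w ∈ lang X, ∃ N : ℕ, ∀ m : ℕ, N ≤ m →
    ∃ v : List A, v.length = m ∧ u ++ v ++ w ∈ lang X

/-- Chain mixing: all but finitely many Markov approximations are topologically mixing. -/
def ChainMixing (X : Set (ℕ → A)) : Prop :=
  ∃ N : ℕ, ∀ n : ℕ, N ≤ n → MixingShift (markovApprox X n)

/-- `C` is the measure center of `X`: the smallest shift space contained in `X` of full
measure for every invariant measure of `X`. -/
def IsMeasureCenter (X C : Set (ℕ → A)) : Prop :=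
  ShiftSpace C ∧ C ⊆ X ∧ (∀ μ ∈ Msigma X, μ C = 1) ∧
  ∀ Y : Set (ℕ → A), ShiftSpace Y → Y ⊆ X → (∀ μ ∈ Msigma X, μ Y = 1) → C ⊆ Y

/-- Measure of the cylinder determined by a word of length `n`. -/
noncomputable def cylMeasure (μ : ProbabilityMeasure (ℕ → A)) {n : ℕ} (w : Fin n → A) : ℝ :=
  ((μ : Measure (ℕ → A)) {x | ∀ k : Fin n, x (k : ℕ) = w k}).toReal

/-- Entropy of the partition into cylinders of length `n`. -/
noncomputable def blockEntropy (μ : ProbabilityMeasure (ℕ → A)) (n : ℕ) : ℝ :=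
  -∑ w : Fin n → A, cylMeasure μ w * Real.log (cylMeasure μ w)

/-- Kolmogorov–Sinai entropy of a shift-invariant measure. -/
noncomputable def ksEntropy (μ : ProbabilityMeasure (ℕ → A)) : ℝ :=
  Filter.limsup (fun n => blockEntropy μ n / (n : ℝ)) Filter.atTop

/-- `μ` is ergodic for the shift. -/
def ErgodicPM (μ : ProbabilityMeasure (ℕ → A)) : Prop :=
  Ergodic shift (μ : Measure (ℕ → A))

/-- Ergodic measures are entropy dense in `M_σ(X)`. -/
def EntropyDense (X : Set (ℕ → A)) : Prop :=
  ∀ μ ∈ Msigma X, ∀ U : Set (ProbabilityMeasure (ℕ → A)), IsOpen U → μ ∈ U →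
    ∀ ε : ℝ, 0 < ε →
      ∃ ν ∈ Msigma X, ν ∈ U ∧ ErgodicPM ν ∧ |ksEntropy ν - ksEntropy μ| < ε

/-- Topological entropy of a shift space. -/
noncomputable def topEntropy (X : Set (ℕ → A)) : ℝ :=
  Filter.limsup (fun n => Real.log (Nat.card ↥(langN n X)) / (n : ℝ)) Filter.atTop

/-- The standard metric on the full shift. -/
noncomputable def rho (x y : ℕ → A) : ℝ :=
  open scoped Classical in
  if x = y then 0 else (2 : ℝ) ^ (-((sInf {j : ℕ | x j ≠ y j} : ℕ) : ℤ))

/-- Proximality of a shift space. -/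
def ProximalShift (X : Set (ℕ → A)) : Prop :=
  ∀ x ∈ X, ∀ y ∈ X,
    Filter.liminf (fun n => rho (shift^[n] x) (shift^[n] y)) Filter.atTop = 0

/-- Minimality of a shift space. -/
def MinimalShift (X : Set (ℕ → A)) : Prop :=
  ShiftSpace X ∧ ∀ Y : Set (ℕ → A), ShiftSpace Y → Y ⊆ X → Y = X

/-- An `A`-labeled directed multigraph on vertices `V` with edges `E`. -/
structure LabeledGraph (A V E : Type*) where
  src : E → V
  dst : E → V
  lab : E → A

namespace LabeledGraph

variable {A' V E : Type*}

/-- `es` is a path in `G` from `u` to `v`. -/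
def PathFromTo (G : LabeledGraph A' V E) (es : List E) (u v : V) : Prop :=
  es.Chain' (fun e f => G.dst e = G.src f) ∧
  es.head?.map G.src = some u ∧ es.getLast?.map G.dst = some v

/-- `G` is strongly connected. -/
def StronglyConnected (G : LabeledGraph A' V E) : Prop :=
  ∀ u v : V, ∃ es : List E, G.PathFromTo es u v

/-- `d` is the period of `G`: the gcd of lengths of closed paths. -/
def HasPeriod (G : LabeledGraph A' V E) (d : ℕ) : Prop :=
  (∀ (es : List E) (u : V), G.PathFromTo es u u → d ∣ es.length) ∧
  ∀ d' : ℕ, (∀ (es : List E) (u : V), G.PathFromTo es u u → d' ∣ es.length) → d' ∣ d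

/-- `b` is a safe symbol for `G`. -/
def SafeSymbol (G : LabeledGraph A' V E) (b : A') : Prop :=
  ∀ e : E, ∃ e' : E, G.src e' = G.src e ∧ G.dst e' = G.dst e ∧ G.lab e' = b

/-- The shift space presented by the labeled graph `G`: labels read along infinite paths. -/
def presents (G : LabeledGraph A' V E) : Set (ℕ → A') :=
  {x | ∃ e : ℕ → E, (∀ j, G.dst (e j) = G.src (e (j + 1))) ∧ ∀ j, x j = G.lab (e j)}

end LabeledGraph

/-- The coupling of a family of labeled graphs: an edge labeled `a` from `v` to `v'` exists
iff each `G k` has an edge from `v k` to `v' k` labeled `a`. -/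
def coupling {A' : Type*} {n : ℕ} {V E : Fin n → Type*}
    (G : ∀ k, LabeledGraph A' (V k) (E k)) :
    LabeledGraph A' (∀ k, V k) {p : (∀ k, E k) × A' // ∀ k, (G k).lab (p.1 k) = p.2} where
  src p := fun k => (G k).src (p.1.1 k)
  dst p := fun k => (G k).dst (p.1.1 k)
  lab p := p.1.2

/-- Sofic shift spaces: those presented by some finite labeled graph. -/
def Sofic (X : Set (ℕ → A)) : Prop :=
  ∃ (V E : Type) (_ : Fintype V) (_ : Fintype E) (G : LabeledGraph A V E),
    X = G.presents

/-- The coded shift generated by a finite set of words `B`: the closure of the set of all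
shifts of infinite concatenations of words from `B`. -/
def codedShift (B : Finset (List A)) : Set (ℕ → A) :=
  closure {x | ∃ (b : ℕ → List A) (k : ℕ), (∀ i, b i ∈ B) ∧ x = shift^[k] (concatSeq b)}

/-!
Suppose an invariant measure `ν` gives almost full measure to the sequences whose first window of
length `n + 1` is a word of `X`. Then most blocks of a fixed length `p` in a `ν`-typical sequence
are words of the Markov approximation `X^M_n`, and since `X^M_n` is mixing, good blocks can be
linked by words of a length `L` that does not depend on `p`. Doing this at all multiples of `p + L`
is a block code with values in `X^M_n`. Its graph measure, averaged over one period, is a joining of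
`ν` with an invariant measure on `X^M_n`, and for large `p` and, given `p`, few bad windows it
makes the two measures `d̄_M`-close. By hypothesis that measure is `d̄_M`-close to one on `X`, and
the triangle inequality concludes.

The one-sided shift is not invertible, so gluing two joinings along their common marginal need not
give an invariant measure. The triangle inequality is saved by the Krylov–Bogolyubov argument:
averaging the glued measure does not change its two invariant marginals.
-/

section Averages

variable {T T' : Type*} [MeasurableSpace T] [MeasurableSpace T']

/-- The Cesàro average `m⁻¹ ∑_{k < m} S^k_* ξ` of the push-forwards of `ξ` along the orbit of `S`.
It is the source of all invariant measures below. For `m = 0` it is the zero measure. -/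
noncomputable def cesaro (S : T → T) (ξ : Measure T) (m : ℕ) : Measure T :=
  (m : ENNReal)⁻¹ • ∑ k ∈ Finset.range m, ξ.map S^[k]

theorem cesaro_apply {S : T → T} (hS : Measurable S) (ξ : Measure T) (m : ℕ) {s : Set T}
    (hs : MeasurableSet s) :
    cesaro S ξ m s = (m : ENNReal)⁻¹ * ∑ k ∈ Finset.range m, ξ (S^[k] ⁻¹' s) := by
  simp only [cesaro, Measure.smul_apply, Measure.finsetSum_apply, smul_eq_mul,
    Measure.map_apply (hS.iterate _) hs]

theorem cesaro_real_apply {S : T → T} (hS : Measurable S) (ξ : Measure T) [IsFiniteMeasure ξ]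
    (m : ℕ) {s : Set T} (hs : MeasurableSet s) :
    (cesaro S ξ m).real s = (m : ℝ)⁻¹ * ∑ k ∈ Finset.range m, ξ.real (S^[k] ⁻¹' s) := by
  rw [Measure.real, cesaro_apply hS ξ m hs, ENNReal.toReal_mul, ENNReal.toReal_inv,
    ENNReal.toReal_natCast, ENNReal.toReal_sum fun k _ => measure_ne_top ξ _]
  rfl

theorem cesaro_apply_eq_of_forall {S : T → T} (hS : Measurable S) (ξ : Measure T) {m : ℕ}
    (hm : m ≠ 0) {s : Set T} (hs : MeasurableSet s) {c : ENNReal} (h : ∀ k, ξ (S^[k] ⁻¹' s) = c) :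
    cesaro S ξ m s = c := by
  simp only [cesaro_apply hS ξ m hs, h, Finset.sum_const, Finset.card_range, nsmul_eq_mul]
  rw [← mul_assoc, ENNReal.inv_mul_cancel (by exact_mod_cast hm) (ENNReal.natCast_ne_top m),
    one_mul]

theorem isProbabilityMeasure_cesaro {S : T → T} (hS : Measurable S) (ξ : Measure T)
    [IsProbabilityMeasure ξ] {m : ℕ} (hm : m ≠ 0) : IsProbabilityMeasure (cesaro S ξ m) :=
  ⟨cesaro_apply_eq_of_forall hS ξ hm MeasurableSet.univ fun _ => measure_univ⟩

theorem cesaro_eq_self {S : T → T} {ξ : Measure T} (h : MeasurePreserving S ξ ξ) {m : ℕ}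
    (hm : m ≠ 0) : cesaro S ξ m = ξ :=
  Measure.ext fun _ hs => cesaro_apply_eq_of_forall h.measurable ξ hm hs fun k =>
    (h.iterate k).measure_preimage hs.nullMeasurableSet

theorem map_cesaro {S : T → T} {S' : T' → T'} (hS : Measurable S) (hS' : Measurable S')
    {g : T → T'} (hg : Measurable g) (hgS : Function.Semiconj g S S') (ξ : Measure T) (m : ℕ) :
    (cesaro S ξ m).map g = cesaro S' (ξ.map g) m := by
  ext s hs
  simp only [Measure.map_apply hg hs, cesaro_apply hS _ _ (hg hs), cesaro_apply hS' _ _ hs,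
    Measure.map_apply hg (hS'.iterate _ hs), ← Set.preimage_comp, (hgS.iterate_right _).comp_eq]

theorem measurePreserving_cesaro {S : T → T} (hS : Measurable S) {ξ : Measure T}
    [IsFiniteMeasure ξ] {m : ℕ} (h : MeasurePreserving S^[m] ξ ξ) :
    MeasurePreserving S (cesaro S ξ m) (cesaro S ξ m) := by
  refine ⟨hS, Measure.ext fun s hs => ?_⟩
  have telescope : ∑ k ∈ Finset.range m, ξ (S^[k + 1] ⁻¹' s) + ξ (S^[0] ⁻¹' s) =
      ∑ k ∈ Finset.range m, ξ (S^[k] ⁻¹' s) + ξ (S^[m] ⁻¹' s) :=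
    (Finset.sum_range_succ' (fun k => ξ (S^[k] ⁻¹' s)) m).symm.trans (Finset.sum_range_succ _ m)
  have wrap_around : ξ (S^[m] ⁻¹' s) = ξ (S^[0] ⁻¹' s) :=
    h.measure_preimage hs.nullMeasurableSet
  rw [wrap_around, ENNReal.add_left_inj (measure_ne_top ξ _)] at telescope
  simp only [Measure.map_apply hS hs, cesaro_apply hS _ _ (hS hs), cesaro_apply hS _ _ hs,
    ← Set.preimage_comp, ← Function.iterate_succ', telescope]

theorem integral_cesaro [TopologicalSpace T] [OpensMeasurableSpace T] {S : T → T}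
    (hS : Measurable S) (ξ : Measure T) [IsFiniteMeasure ξ] (m : ℕ)
    (f : BoundedContinuousFunction T ℝ) :
    ∫ x, f x ∂cesaro S ξ m = ∫ x, birkhoffAverage ℝ S f m x ∂ξ := by
  have hf (k : ℕ) : Integrable f (ξ.map S^[k]) := f.integrable _
  simp only [cesaro, integral_smul_measure, ENNReal.toReal_inv, ENNReal.toReal_natCast,
    integral_finsetSum_measure fun k _ => hf k, birkhoffAverage, birkhoffSum, integral_smul]
  rw [integral_finsetSum (f := fun k x => f (S^[k] x)) _ fun k _ =>
    (hf k).comp_measurable (hS.iterate k)]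
  simp only [integral_map (hS.iterate _).aemeasurable f.continuous.measurable.aestronglyMeasurable]

theorem abs_integral_comp_cesaro_sub_le [TopologicalSpace T] [BorelSpace T] {S : T → T}
    (hS : Continuous S) (ξ : Measure T) [IsProbabilityMeasure ξ] {m : ℕ} (hm : m ≠ 0)
    (f : BoundedContinuousFunction T ℝ) :
    |∫ x, f (S x) ∂cesaro S ξ m - ∫ x, f x ∂cesaro S ξ m| ≤ 2 * ‖f‖ / m := by
  have := isProbabilityMeasure_cesaro hS.measurable ξ hm
  let g : BoundedContinuousFunction T ℝ := f.compContinuous ⟨S, hS⟩ - f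
  have hg (x : T) : birkhoffAverage ℝ S g m x =
      birkhoffAverage ℝ S f m (S x) - birkhoffAverage ℝ S f m x := by
    simp only [birkhoffAverage, birkhoffSum, ← smul_sub, ← Finset.sum_sub_distrib,
      ← Function.iterate_succ_apply, Function.iterate_succ_apply']
    rfl
  have hbound (x : T) : ‖birkhoffAverage ℝ S g m x‖ ≤ 2 * ‖f‖ / m := by
    rw [hg, ← dist_eq_norm, dist_birkhoffAverage_apply_birkhoffAverage]
    gcongr
    exact f.dist_le_two_norm _ _
  have hsub : ∫ x, f (S x) ∂cesaro S ξ m - ∫ x, f x ∂cesaro S ξ m = ∫ x, g x ∂cesaro S ξ m :=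
    (integral_sub ((f.compContinuous ⟨S, hS⟩).integrable _) (f.integrable _)).symm
  rw [hsub, integral_cesaro hS.measurable, ← Real.norm_eq_abs]
  simpa using norm_integral_le_of_norm_le_const (ae_of_all ξ hbound)

end Averages

section KrylovBogolyubov

variable {T T' : Type*} [TopologicalSpace T] [MeasurableSpace T] [BorelSpace T]
  [TopologicalSpace T'] [MeasurableSpace T'] [BorelSpace T']

/-- The Cesàro average of `m + 1` push-forwards as a `ProbabilityMeasure`; the shift of the index
avoids the empty average. -/
noncomputable def cesaroPM {S : T → T} (hS : Continuous S) (ξ : ProbabilityMeasure T) (m : ℕ) :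
    ProbabilityMeasure T :=
  ⟨cesaro S ξ (m + 1), isProbabilityMeasure_cesaro hS.measurable _ m.succ_ne_zero⟩

theorem measurePreserving_of_mapClusterPt_cesaroPM [HasOuterApproxClosed T] {S : T → T}
    (hS : Continuous S) {ξ ζ : ProbabilityMeasure T}
    (hζ : MapClusterPt ζ atTop (cesaroPM hS ξ)) :
    MeasurePreserving S (ζ : Measure T) ζ := by
  refine ⟨hS.measurable, ?_⟩
  have : IsProbabilityMeasure ((ζ : Measure T).map S) :=
    Measure.isProbabilityMeasure_map hS.aemeasurable
  refine ext_of_forall_integral_eq_of_IsFiniteMeasure fun f => ?_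
  let defect (ν : ProbabilityMeasure T) : ℝ :=
    ∫ x, f.compContinuous ⟨S, hS⟩ x ∂(ν : Measure T) - ∫ x, f x ∂(ν : Measure T)
  have hcont : Continuous defect :=
    (ProbabilityMeasure.continuous_integral_boundedContinuousFunction _).sub
      (ProbabilityMeasure.continuous_integral_boundedContinuousFunction _)
  have hlim : Tendsto (defect ∘ cesaroPM hS ξ) atTop (𝓝 0) :=
    squeeze_zero_norm (fun m => abs_integral_comp_cesaro_sub_le hS _ m.succ_ne_zero f)
      ((tendsto_const_div_atTop_nhds_zero_nat _).comp (tendsto_add_atTop_nat 1))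
  have hdefect : defect ζ = 0 :=
    eq_of_nhds_neBot ((hζ.continuousAt_comp hcont.continuousAt).clusterPt.mono hlim)
  rw [integral_map hS.aemeasurable f.continuous.measurable.aestronglyMeasurable]
  exact sub_eq_zero.1 hdefect

theorem map_eq_of_mapClusterPt_cesaroPM [HasOuterApproxClosed T'] {S : T → T} (hS : Continuous S)
    {S' : T' → T'} {g : T → T'} (hg : Continuous g) (hgS : Function.Semiconj g S S')
    {ξ ζ : ProbabilityMeasure T} {μ : Measure T'} (hμ : MeasurePreserving S' μ μ)
    (hξ : (ξ : Measure T).map g = μ) (hζ : MapClusterPt ζ atTop (cesaroPM hS ξ)) :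
    (ζ : Measure T).map g = μ := by
  subst hξ
  have hconst (m : ℕ) : (cesaroPM hS ξ m).map hg.aemeasurable = ξ.map hg.aemeasurable :=
    Subtype.ext <| (map_cesaro hS.measurable hμ.measurable hg.measurable hgS ξ (m + 1)).trans
      (cesaro_eq_self hμ m.succ_ne_zero)
  have hclosed :
      IsClosed {ν : ProbabilityMeasure T | ν.map hg.aemeasurable = ξ.map hg.aemeasurable} :=
    isClosed_singleton.preimage (ProbabilityMeasure.continuous_map hg)
  exact congrArg Subtype.val (hclosed.mem_of_mapClusterPt hζ (Eventually.of_forall hconst))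

end KrylovBogolyubov

section Gluing

variable {T₁ T₂ T₃ : Type*} [MeasurableSpace T₁] [MeasurableSpace T₂] [MeasurableSpace T₃]

theorem exists_gluing [StandardBorelSpace T₃] [Nonempty T₃] (ξ : Measure (T₁ × T₂)) [SFinite ξ]
    (η : Measure (T₂ × T₃)) [IsFiniteMeasure η] (h : ξ.map Prod.snd = η.map Prod.fst) :
    ∃ ζ : Measure ((T₁ × T₂) × T₃), ζ.map Prod.fst = ξ ∧ ζ.map (fun p => (p.1.2, p.2)) = η := by
  refine ⟨ξ.compProd (η.condKernel.comap Prod.snd measurable_snd), Measure.fst_compProd _ _,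
    Measure.ext fun s hs => ?_⟩
  have hproj : Measurable fun p : (T₁ × T₂) × T₃ => (p.1.2, p.2) := by fun_prop
  calc (ξ.compProd (η.condKernel.comap Prod.snd measurable_snd)).map (fun p => (p.1.2, p.2)) s
      = ∫⁻ p, η.condKernel p.2 (Prod.mk p.2 ⁻¹' s) ∂ξ := by
        rw [Measure.map_apply hproj hs, Measure.compProd_apply (hproj hs)]
        rfl
    _ = ∫⁻ y, η.condKernel y (Prod.mk y ⁻¹' s) ∂η.fst := by
        rw [Measure.fst, ← h, lintegral_map
          (ProbabilityTheory.Kernel.measurable_kernel_prodMk_left hs) measurable_snd]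
    _ = η s := by rw [← Measure.compProd_apply hs, η.disintegrate η.condKernel]

variable [TopologicalSpace T₁] [PolishSpace T₁] [CompactSpace T₁] [BorelSpace T₁]
  [TopologicalSpace T₂] [PolishSpace T₂] [CompactSpace T₂] [BorelSpace T₂]
  [TopologicalSpace T₃] [PolishSpace T₃] [CompactSpace T₃] [BorelSpace T₃]

/- The gluing along the common marginal need not be invariant when the maps are not invertible, but
averaging it keeps its invariant marginals. -/
theorem exists_invariant_gluing [Nonempty T₃] {S₁ : T₁ → T₁} {S₂ : T₂ → T₂} {S₃ : T₃ → T₃}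
    (hS₁ : Continuous S₁) (hS₂ : Continuous S₂) (hS₃ : Continuous S₃)
    {ξ : Measure (T₁ × T₂)} [IsProbabilityMeasure ξ]
    (hξ : MeasurePreserving (Prod.map S₁ S₂) ξ ξ)
    {η : Measure (T₂ × T₃)} [IsProbabilityMeasure η]
    (hη : MeasurePreserving (Prod.map S₂ S₃) η η) (h : ξ.map Prod.snd = η.map Prod.fst) :
    ∃ ζ : Measure ((T₁ × T₂) × T₃),
      MeasurePreserving (Prod.map (Prod.map S₁ S₂) S₃) ζ ζ ∧
      ζ.map Prod.fst = ξ ∧ ζ.map (fun p => (p.1.2, p.2)) = η := by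
  obtain ⟨ζ₀, hζ₀ξ, hζ₀η⟩ := exists_gluing ξ η h
  let ζ₀' : ProbabilityMeasure ((T₁ × T₂) × T₃) :=
    ⟨ζ₀, (Measure.isProbabilityMeasure_map_iff measurable_fst.aemeasurable).1 (hζ₀ξ.symm ▸ ‹_›)⟩
  have hS : Continuous (Prod.map (Prod.map S₁ S₂) S₃) := (hS₁.prodMap hS₂).prodMap hS₃
  have hproj : Continuous fun p : (T₁ × T₂) × T₃ => (p.1.2, p.2) := by fun_prop
  obtain ⟨ζ, hζ⟩ := exists_clusterPt_of_compactSpace (map (cesaroPM hS ζ₀') atTop)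
  exact ⟨ζ, measurePreserving_of_mapClusterPt_cesaroPM hS hζ,
    map_eq_of_mapClusterPt_cesaroPM hS continuous_fst (fun _ => rfl) (ξ := ζ₀') hξ hζ₀ξ hζ,
    map_eq_of_mapClusterPt_cesaroPM hS hproj (fun _ => rfl) (ξ := ζ₀') hη hζ₀η hζ⟩

end Gluing

section Shift

variable {α : Type}

theorem shift_iterate_apply (k : ℕ) (x : ℕ → α) (j : ℕ) : shift^[k] x j = x (k + j) := by
  induction k generalizing x with
  | zero => rw [Function.iterate_zero_apply, Nat.zero_add]
  | succ k ih =>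
    rw [Function.iterate_succ_apply, ih, shift]
    congr 1
    omega

theorem measurable_shift [MeasurableSpace α] : Measurable (shift : (ℕ → α) → ℕ → α) :=
  measurable_pi_lambda _ fun j => measurable_pi_apply (j + 1)

theorem continuous_shift [TopologicalSpace α] : Continuous (shift : (ℕ → α) → ℕ → α) :=
  continuous_pi fun j => continuous_apply (j + 1)

theorem invariantPM.measurePreserving [MeasurableSpace α] {μ : ProbabilityMeasure (ℕ → α)}
    (hμ : invariantPM μ) : MeasurePreserving shift (μ : Measure (ℕ → α)) μ :=
  ⟨measurable_shift, hμ⟩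

end Shift

section Joinings

variable {α : Type}

/-- The set of pairs of sequences with different initial symbols, whose measure the infimum in
`dbarM` minimizes. -/
def mismatch (α : Type) : Set ((ℕ → α) × (ℕ → α)) := {p | p.1 0 ≠ p.2 0}

variable [MeasurableSpace α] {μ ν μ₁ μ₂ μ₃ : ProbabilityMeasure (ℕ → α)}
  {ξ η : Measure ((ℕ → α) × (ℕ → α))}

theorem measurableSet_mismatch [Countable α] [MeasurableSingletonClass α] :
    MeasurableSet (mismatch α) :=
  (measurableSet_eq_fun (by fun_prop) (by fun_prop)).compl

theorem IsJoining.measurePreserving (h : IsJoining ξ μ ν) :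
    MeasurePreserving (Prod.map shift shift) ξ ξ :=
  ⟨measurable_shift.prodMap measurable_shift, h.1⟩

theorem IsJoining.measurePreserving_fst (h : IsJoining ξ μ ν) : MeasurePreserving Prod.fst ξ μ :=
  ⟨measurable_fst, h.2.1⟩

theorem IsJoining.measurePreserving_snd (h : IsJoining ξ μ ν) : MeasurePreserving Prod.snd ξ ν :=
  ⟨measurable_snd, h.2.2⟩

theorem IsJoining.isProbabilityMeasure (h : IsJoining ξ μ ν) : IsProbabilityMeasure ξ :=
  (Measure.isProbabilityMeasure_map_iff measurable_fst.aemeasurable).1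
    (h.2.1.symm ▸ inferInstance)

theorem isJoining_map {T : Type*} [MeasurableSpace T] {ζ : Measure T} {S : T → T}
    (hS : MeasurePreserving S ζ ζ) {f g : T → ℕ → α} (hf : MeasurePreserving f ζ μ)
    (hg : MeasurePreserving g ζ ν) (hfS : Function.Semiconj f S shift)
    (hgS : Function.Semiconj g S shift) : IsJoining (ζ.map fun t => (f t, g t)) μ ν := by
  have hfg : Measurable fun t => (f t, g t) := hf.measurable.prodMk hg.measurable
  refine ⟨?_, ?_, ?_⟩
  · calc (ζ.map fun t => (f t, g t)).map (Prod.map shift shift)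
        = (ζ.map S).map fun t => (f t, g t) := by
          rw [Measure.map_map (measurable_shift.prodMap measurable_shift) hfg,
            Measure.map_map hfg hS.measurable]
          exact congrArg (ζ.map ·) (funext fun t => Prod.ext (hfS t).symm (hgS t).symm)
      _ = ζ.map fun t => (f t, g t) := by rw [hS.map_eq]
  · rw [Measure.map_map measurable_fst hfg]
    exact hf.map_eq
  · rw [Measure.map_map measurable_snd hfg]
    exact hg.map_eq

theorem isJoining_prod (hμ : invariantPM μ) (hν : invariantPM ν) :
    IsJoining ((μ : Measure (ℕ → α)).prod ν) μ ν :=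
  ⟨(hμ.measurePreserving.prod hν.measurePreserving).map_eq, Measure.fst_prod, Measure.snd_prod⟩

theorem IsJoining.map_swap (h : IsJoining ξ μ ν) : IsJoining (ξ.map Prod.swap) ν μ :=
  isJoining_map h.measurePreserving h.measurePreserving_snd h.measurePreserving_fst
    (fun _ => rfl) fun _ => rfl

theorem IsJoining.exists_comp [Finite α] [MeasurableSingletonClass α] (hξ : IsJoining ξ μ₁ μ₂)
    (hη : IsJoining η μ₂ μ₃) : ∃ ζ, IsJoining ζ μ₁ μ₃ ∧
      ζ.real (mismatch α) ≤ ξ.real (mismatch α) + η.real (mismatch α) := by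
  let _ : TopologicalSpace α := ⊥
  have : DiscreteTopology α := ⟨rfl⟩
  have := hξ.isProbabilityMeasure
  have := hη.isProbabilityMeasure
  have : PolishSpace (ℕ → α) := {}
  have := μ₁.nonempty
  obtain ⟨ζ, hζ, h₁₂, h₂₃⟩ := exists_invariant_gluing continuous_shift continuous_shift
    continuous_shift hξ.measurePreserving hη.measurePreserving (hξ.2.2.trans hη.2.1.symm)
  have hfst : MeasurePreserving Prod.fst ζ ξ := ⟨measurable_fst, h₁₂⟩
  have hsnd : MeasurePreserving (fun p => (p.1.2, p.2)) ζ η := ⟨by fun_prop, h₂₃⟩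
  have : IsProbabilityMeasure ζ :=
    (Measure.isProbabilityMeasure_map_iff measurable_fst.aemeasurable).1 (h₁₂.symm ▸ ‹_›)
  have hcover : (fun p : ((ℕ → α) × (ℕ → α)) × (ℕ → α) => (p.1.1, p.2)) ⁻¹' mismatch α ⊆
      Prod.fst ⁻¹' mismatch α ∪ (fun p => (p.1.2, p.2)) ⁻¹' mismatch α := fun p hp =>
    or_iff_not_imp_left.2 fun h h' => hp ((not_not.1 h).trans h')
  refine ⟨_, isJoining_map hζ (hξ.measurePreserving_fst.comp hfst)
    (hη.measurePreserving_snd.comp hsnd) (fun _ => rfl) fun _ => rfl, ?_⟩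
  rw [map_measureReal_apply (by fun_prop) measurableSet_mismatch, ← h₁₂, ← h₂₃,
    map_measureReal_apply measurable_fst measurableSet_mismatch,
    map_measureReal_apply (by fun_prop) measurableSet_mismatch]
  exact (measureReal_mono hcover).trans (measureReal_union_le _ _)

theorem dbarM_le (h : IsJoining ξ μ ν) : dbarM μ ν ≤ ξ.real (mismatch α) :=
  csInf_le ⟨0, by rintro _ ⟨_, -, rfl⟩; exact ENNReal.toReal_nonneg⟩ ⟨ξ, h, rfl⟩

theorem dbarM_nonneg (μ ν : ProbabilityMeasure (ℕ → α)) : 0 ≤ dbarM μ ν :=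
  Real.sInf_nonneg (by rintro _ ⟨_, -, rfl⟩; exact ENNReal.toReal_nonneg)

theorem dbarM_le_one (hμ : invariantPM μ) (hν : invariantPM ν) : dbarM μ ν ≤ 1 :=
  (dbarM_le (isJoining_prod hμ hν)).trans measureReal_le_one

theorem exists_isJoining_of_dbarM_lt (hμ : invariantPM μ) (hν : invariantPM ν) {r : ℝ}
    (h : dbarM μ ν < r) : ∃ ξ, IsJoining ξ μ ν ∧ ξ.real (mismatch α) < r := by
  obtain ⟨_, ⟨ξ, hξ, rfl⟩, hr⟩ := exists_lt_of_csInf_lt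
    (by exact ⟨_, _, isJoining_prod hμ hν, rfl⟩) h
  exact ⟨ξ, hξ, hr⟩

theorem dbarM_comm [Countable α] [MeasurableSingletonClass α] (μ ν : ProbabilityMeasure (ℕ → α)) :
    dbarM μ ν = dbarM ν μ := by
  have hswap : Prod.swap ⁻¹' mismatch α = mismatch α := Set.ext fun _ => ne_comm
  have hsub (μ ν : ProbabilityMeasure (ℕ → α)) :
      {r | ∃ ξ, IsJoining ξ μ ν ∧ r = ξ.real (mismatch α)} ⊆
        {r | ∃ ξ, IsJoining ξ ν μ ∧ r = ξ.real (mismatch α)} := by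
    rintro _ ⟨ξ, hξ, rfl⟩
    refine ⟨_, hξ.map_swap, ?_⟩
    rw [map_measureReal_apply measurable_swap measurableSet_mismatch, hswap]
  exact congrArg sInf ((hsub μ ν).antisymm (hsub ν μ))

theorem dbarM_triangle [Finite α] [MeasurableSingletonClass α] (h₁ : invariantPM μ₁)
    (h₂ : invariantPM μ₂) (h₃ : invariantPM μ₃) : dbarM μ₁ μ₃ ≤ dbarM μ₁ μ₂ + dbarM μ₂ μ₃ := by
  refine le_add_of_forall_lt fun a ha b hb => ?_
  obtain ⟨ξ, hξ, hξa⟩ := exists_isJoining_of_dbarM_lt h₁ h₂ ha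
  obtain ⟨η, hη, hηb⟩ := exists_isJoining_of_dbarM_lt h₂ h₃ hb
  obtain ⟨ζ, hζ, hle⟩ := hξ.exists_comp hη
  exact (dbarM_le hζ).trans (hle.trans (add_le_add hξa.le hηb.le))

end Joinings

theorem exists_lt_of_hausdist_lt {Z : Type*} {d : Z → Z → ℝ} {P Q : Set Z} {C r : ℝ}
    (hQ : Q.Nonempty) (hd : ∀ p ∈ P, ∀ q ∈ Q, d p q ∈ Set.Icc 0 C) (h : hausdist d P Q < r)
    {p : Z} (hp : p ∈ P) : ∃ q ∈ Q, d p q < r := by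
  have : Nonempty Q := hQ.to_subtype
  have hbelow (p : P) : BddBelow (Set.range fun q : Q => d p q) :=
    ⟨0, Set.forall_mem_range.2 fun q => (hd p p.2 q q.2).1⟩
  have habove : BddAbove (Set.range fun p : P => ⨅ q : Q, d p q) := by
    obtain ⟨q, hq⟩ := hQ
    exact ⟨C, Set.forall_mem_range.2 fun p =>
      (ciInf_le (hbelow p) ⟨q, hq⟩).trans (hd p p.2 q hq).2⟩
  obtain ⟨q, hq⟩ := exists_lt_of_ciInf_lt
    ((le_ciSup habove ⟨p, hp⟩).trans_lt ((le_max_left _ _).trans_lt h))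
  exact ⟨q, q.2, hq⟩

theorem isLocallyConstant_of_dependsOn {ι β : Type*} {E : ι → Type*}
    [∀ i, TopologicalSpace (E i)] [∀ i, DiscreteTopology (E i)] {f : (∀ i, E i) → β} {s : Set ι}
    (hs : s.Finite) (hf : DependsOn f s) : IsLocallyConstant f := by
  refine (IsLocallyConstant.iff_eventually_eq f).2 fun x => ?_
  have hagree : ∀ᶠ y in 𝓝 x, ∀ i ∈ s, y i = x i := (eventually_all_finite hs).2 fun i _ =>
    ((isOpen_discrete {x i}).preimage (continuous_apply i)).mem_nhds rfl
  exact hagree.mono fun y hy => hf hy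

theorem exists_choice_dependsOn {ι β : Type*} {E : ι → Type*} {r : (∀ i, E i) → β → Prop}
    {s : Set ι} (hr : DependsOn r s) (h : ∀ x, ∃ y, r x y) :
    ∃ f : (∀ i, E i) → β, DependsOn f s ∧ ∀ x, r x (f x) := by
  rcases isEmpty_or_nonempty β with _ | _
  · exact ⟨fun x => (h x).choose, fun x => isEmptyElim (h x).choose, fun x => (h x).choose_spec⟩
  · exact ⟨fun x => Classical.epsilon (r x), fun _ _ hxy => congrArg _ (hr hxy),
      fun x => Classical.epsilon_spec (h x)⟩

section Language

variable {α : Type} {X Y : Set (ℕ → α)} {x y : ℕ → α}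

theorem lang_mono (h : X ⊆ Y) : lang X ⊆ lang Y := fun _ ⟨x, hx, hw⟩ => ⟨x, h hx, hw⟩

theorem cylNbhd_mono (h : X ⊆ Y) (n : ℕ) : cylNbhd X n ⊆ cylNbhd Y n := fun _ hx => lang_mono h hx

theorem dependsOn_mem_cylNbhd (X : Set (ℕ → α)) (n : ℕ) :
    DependsOn (· ∈ cylNbhd X n) (Set.Iio n) := fun x y h => by
  have hword : (fun k : Fin n => x k) = fun k : Fin n => y k := funext fun k => h k k.2
  simp only [cylNbhd, Set.mem_ofPred_eq, hword]

theorem mem_cylNbhd_congr {n : ℕ} (h : ∀ k < n, x k = y k) :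
    x ∈ cylNbhd X n ↔ y ∈ cylNbhd X n :=
  (dependsOn_mem_cylNbhd X n h).to_iff

theorem shift_iterate_mem_cylNbhd (hx : x ∈ X) (i n : ℕ) : shift^[i] x ∈ cylNbhd X n := by
  refine ⟨x, hx, i, List.ext_getElem (by simp only [List.length_ofFn]) fun k _ _ => ?_⟩
  simp only [List.getElem_ofFn, shift_iterate_apply]
  rfl

theorem subset_cylNbhd (X : Set (ℕ → α)) (n : ℕ) : X ⊆ cylNbhd X n := fun _ hx =>
  shift_iterate_mem_cylNbhd hx 0 n

theorem isClopen_cylNbhd [TopologicalSpace α] [DiscreteTopology α] (X : Set (ℕ → α)) (n : ℕ) :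
    IsClopen (cylNbhd X n) := by
  simpa using (isLocallyConstant_of_dependsOn (Set.finite_Iio n)
    (dependsOn_mem_cylNbhd X n)).isClopen_fiber True

theorem measurableSet_cylNbhd [Finite α] [MeasurableSpace α] [MeasurableSingletonClass α]
    (X : Set (ℕ → α)) (n : ℕ) : MeasurableSet (cylNbhd X n) := by
  let _ : TopologicalSpace α := ⊥
  have : DiscreteTopology α := ⟨rfl⟩
  exact (isClopen_cylNbhd X n).isClosed.measurableSet

theorem mem_markovApprox_iff {n : ℕ} :
    x ∈ markovApprox X n ↔ ∀ i, shift^[i] x ∈ cylNbhd X (n + 1) := by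
  simp only [markovApprox, cylNbhd, Set.mem_ofPred_eq, shift_iterate_apply]

theorem subset_markovApprox (X : Set (ℕ → α)) (n : ℕ) : X ⊆ markovApprox X n := fun _ hx =>
  mem_markovApprox_iff.2 fun i => shift_iterate_mem_cylNbhd hx i _

theorem shift_mem_markovApprox {n : ℕ} (hx : x ∈ markovApprox X n) :
    shift x ∈ markovApprox X n :=
  mem_markovApprox_iff.2 fun i => mem_markovApprox_iff.1 hx (i + 1)

theorem measurableSet_markovApprox [Finite α] [MeasurableSpace α] [MeasurableSingletonClass α]
    (X : Set (ℕ → α)) (n : ℕ) : MeasurableSet (markovApprox X n) := by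
  have hinter : markovApprox X n = ⋂ i, shift^[i] ⁻¹' cylNbhd X (n + 1) :=
    Set.ext fun x => by simp only [mem_markovApprox_iff, Set.mem_iInter, Set.mem_preimage]
  rw [hinter]
  exact .iInter fun i => (measurable_shift.iterate i) (measurableSet_cylNbhd X (n + 1))

theorem exists_mem_of_mem_lang (hY : Set.MapsTo shift Y Y) {w : List α} (hw : w ∈ lang Y) :
    ∃ x ∈ Y, ∀ (k : ℕ) (hk : k < w.length), x k = w[k] := by
  obtain ⟨x, hx, i, hi⟩ := hw
  refine ⟨shift^[i] x, hY.iterate i hx, fun k hk => ?_⟩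
  simpa only [shift_iterate_apply, List.getElem_ofFn] using (List.getElem_of_eq hi hk).symm

/-- Sequences whose first `N + 1` windows of length `n + 1` belong to the language of `X`: when
`markovApprox X n` is mixing, they can be coded into it without changing their first `N + (n + 1)`
symbols. -/
def admissiblePrefix (X : Set (ℕ → α)) (n N : ℕ) : Set (ℕ → α) :=
  {x | ∀ i ≤ N, shift^[i] x ∈ cylNbhd X (n + 1)}

theorem subset_admissiblePrefix (X : Set (ℕ → α)) (n N : ℕ) : X ⊆ admissiblePrefix X n N :=
  fun _ hx i _ => shift_iterate_mem_cylNbhd hx i _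

theorem dependsOn_mem_admissiblePrefix (X : Set (ℕ → α)) (n N : ℕ) :
    DependsOn (· ∈ admissiblePrefix X n N) (Set.Iio (N + (n + 1))) := fun x y h => by
  refine propext (forall₂_congr fun i hi => mem_cylNbhd_congr fun k hk => ?_)
  rw [shift_iterate_apply, shift_iterate_apply]
  exact h (i + k) (by grind)

end Language

section Mixing

variable {α : Type} [Finite α] {X Y : Set (ℕ → α)}

theorem MixingShift.exists_uniform_gap (hY : MixingShift Y) (m n : ℕ) :
    ∃ L, ∀ u ∈ langN m Y, ∀ w ∈ langN n Y, ∃ v : List α, v.length = L ∧ u ++ v ++ w ∈ lang Y := by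
  have finite_langN (n : ℕ) : (langN n Y).Finite :=
    (List.finite_length_eq α n).subset fun _ hw => hw.2
  have hgap : ∀ᶠ L in atTop, ∀ u ∈ langN m Y, ∀ w ∈ langN n Y,
      ∃ v : List α, v.length = L ∧ u ++ v ++ w ∈ lang Y :=
    (eventually_all_finite (finite_langN m)).2 fun u hu =>
      (eventually_all_finite (finite_langN n)).2 fun w hw => eventually_atTop.2 (hY u hu.1 w hw.1)
  exact hgap.exists

theorem MixingShift.exists_bridge (hY : MixingShift Y) (hshift : Set.MapsTo shift Y Y) (m : ℕ) :
    ∃ L, ∀ x ∈ cylNbhd Y m, ∀ y ∈ cylNbhd Y m,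
      ∃ z ∈ Y, ∀ k < m, z k = x k ∧ z (m + L + k) = y k := by
  obtain ⟨L, hL⟩ := hY.exists_uniform_gap m m
  refine ⟨L, fun x hx y hy => ?_⟩
  obtain ⟨v, hv, hmem⟩ := hL _ ⟨hx, List.length_ofFn⟩ _ ⟨hy, List.length_ofFn⟩
  obtain ⟨z, hz, hword⟩ := exists_mem_of_mem_lang hshift hmem
  refine ⟨z, hz, fun k hk => ⟨?_, ?_⟩⟩
  · rw [hword k (by grind), List.getElem_append_left (by grind),
      List.getElem_append_left (by grind), List.getElem_ofFn]
  · rw [hword (m + L + k) (by grind), List.getElem_append_right (by grind), List.getElem_ofFn]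
    simp only [List.length_append, List.length_ofFn, hv, Nat.add_sub_cancel_left]

theorem exists_splice {n : ℕ} (hmix : MixingShift (markovApprox X n)) :
    ∃ L, ∀ N, ∀ x ∈ admissiblePrefix X n N, ∀ y ∈ cylNbhd X (n + 1), ∃ z ∈ markovApprox X n,
      (∀ j < N + (n + 1), z j = x j) ∧ ∀ k < n + 1, z (N + (n + 1) + L + k) = y k := by
  have hsub := cylNbhd_mono (subset_markovApprox X n) (n + 1)
  obtain ⟨L, hL⟩ := hmix.exists_bridge (fun _ => shift_mem_markovApprox) (n + 1)
  refine ⟨L, fun N x hx y hy => ?_⟩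
  obtain ⟨b, hb, hxy⟩ := hL (shift^[N] x) (hsub (hx N le_rfl)) y (hsub hy)
  let z (j : ℕ) : α := if j < N then x j else b (j - N)
  have hzb (j : ℕ) : z (N + j) = b j := by
    simp only [z, not_lt.2 (Nat.le_add_right N j), if_false, Nat.add_sub_cancel_left]
  have hzx (j : ℕ) (hj : j < N + (n + 1)) : z j = x j := by
    rcases lt_or_ge j N with hjN | hNj
    · exact if_pos hjN
    · obtain ⟨k, rfl⟩ := Nat.exists_eq_add_of_le hNj
      rw [hzb, (hxy k (by omega)).1, shift_iterate_apply]
  refine ⟨z, mem_markovApprox_iff.2 fun i => ?_, hzx, fun k hk => ?_⟩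
  · rcases lt_or_ge i N with hiN | hNi
    · refine (mem_cylNbhd_congr fun k hk => ?_).2 (hx i hiN.le)
      rw [shift_iterate_apply, shift_iterate_apply, hzx _ (by omega)]
    · obtain ⟨j, rfl⟩ := Nat.exists_eq_add_of_le hNi
      refine (mem_cylNbhd_congr fun k _ => ?_).2 (mem_markovApprox_iff.1 hb j)
      rw [shift_iterate_apply, shift_iterate_apply, add_assoc, hzb]
  · rw [add_assoc N, add_assoc N, hzb, (hxy k hk).2]

end Mixing

section BlockMaps

variable {α : Type} {R : (ℕ → α) → ℕ → α} {m : ℕ}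

/-- The block code that replaces the symbols of `x` at the places `m * q, …, m * q + m - 1` by the
first `m` symbols of `R (shift^[m * q] x)`, for every `q`. It lands in a Markov approximation when
the further symbols of `R (shift^[m * q] x)` are the first ones of `R (shift^[m * (q + 1)] x)`. -/
def blockMap (m : ℕ) (R : (ℕ → α) → ℕ → α) (x : ℕ → α) : ℕ → α :=
  fun j => R (shift^[m * (j / m)] x) (j % m)

theorem blockMap_mul_add (x : ℕ → α) (q : ℕ) {r : ℕ} (hr : r < m) :
    blockMap m R x (m * q + r) = R (shift^[m * q] x) r := by
  rw [blockMap, Nat.mul_add_div (by omega), Nat.mul_add_mod, Nat.div_eq_of_lt hr,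
    Nat.mod_eq_of_lt hr, Nat.add_zero]

theorem blockMap_apply_of_lt (x : ℕ → α) {r : ℕ} (hr : r < m) : blockMap m R x r = R x r := by
  simpa using blockMap_mul_add (R := R) x 0 hr

theorem semiconj_blockMap (hm : 0 < m) :
    Function.Semiconj (blockMap m R) shift^[m] shift^[m] := fun x => funext fun j => by
  rw [shift_iterate_apply, blockMap, blockMap, ← Function.iterate_add_apply,
    Nat.add_div_left j hm, Nat.add_mod_left, Nat.mul_succ]

theorem continuous_blockMap [TopologicalSpace α] (hR : Continuous R) :
    Continuous (blockMap m R) :=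
  continuous_pi fun _ => (continuous_apply _).comp (hR.comp (continuous_shift.iterate _))

theorem blockMap_mul_add_of_overlap {l : ℕ} (hl : l ≤ m)
    (hR : ∀ x, ∀ k < l, R x (m + k) = R (shift^[m] x) k) (x : ℕ → α) (q : ℕ) {r : ℕ}
    (hr : r < m + l) : blockMap m R x (m * q + r) = R (shift^[m * q] x) r := by
  rcases lt_or_ge r m with hrm | hmr
  · exact blockMap_mul_add x q hrm
  · obtain ⟨k, rfl⟩ := Nat.exists_eq_add_of_le hmr
    rw [hR _ k (by omega), ← Function.iterate_add_apply, add_comm m (m * q), ← Nat.mul_succ,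
      ← blockMap_mul_add (R := R) x (q + 1) (by omega : k < m), Nat.mul_succ, add_assoc]

theorem blockMap_mem_markovApprox {X : Set (ℕ → α)} {n : ℕ} (hn : n + 1 ≤ m)
    (hmem : ∀ x, R x ∈ markovApprox X n)
    (hR : ∀ x, ∀ k < n + 1, R x (m + k) = R (shift^[m] x) k) (x : ℕ → α) :
    blockMap m R x ∈ markovApprox X n := by
  refine mem_markovApprox_iff.2 fun i => ?_
  refine (mem_cylNbhd_congr fun k hk => ?_).2
    (mem_markovApprox_iff.1 (hmem (shift^[m * (i / m)] x)) (i % m))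
  have hlt := Nat.mod_lt i (show m > 0 by omega)
  rw [shift_iterate_apply, shift_iterate_apply,
    ← blockMap_mul_add_of_overlap hn hR x _ (by omega), ← add_assoc, Nat.div_add_mod]

end BlockMaps

section BlockCode

variable {α : Type} {X : Set (ℕ → α)}

theorem exists_admissible_repair (hX : X.Nonempty) (n N : ℕ) :
    ∃ b : (ℕ → α) → ℕ → α, (∀ x, b x ∈ admissiblePrefix X n N) ∧
      (∀ j < N + (n + 1), DependsOn (b · j) (Set.Iio (N + (n + 1)))) ∧
      ∀ x ∈ admissiblePrefix X n N, b x = x := by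
  classical
  obtain ⟨x₀, hx₀⟩ := hX
  refine ⟨fun x => if x ∈ admissiblePrefix X n N then x else x₀, fun x => ?_, fun j hj x y h => ?_,
    fun x hx => if_pos hx⟩
  · beta_reduce
    split_ifs with hx
    exacts [hx, subset_admissiblePrefix X n N hx₀]
  · simp only [apply_ite (fun x : ℕ → α => x j), h j hj, dependsOn_mem_admissiblePrefix X n N h]

/- The splices of `x` and of `shift^[N + (n + 1) + L] x` must agree on their overlap, although `R`
chooses them independently. Splicing repaired sequences fixes the overlap in advance. -/
theorem exists_local_splice [Finite α] {n : ℕ} (hX : X.Nonempty)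
    (hmix : MixingShift (markovApprox X n)) :
    ∃ L, ∀ N, ∃ R : (ℕ → α) → ℕ → α,
      DependsOn R (Set.Iio (N + (n + 1) + L + (N + (n + 1)))) ∧
      (∀ x, R x ∈ markovApprox X n) ∧
      (∀ x, ∀ k < n + 1, R x (N + (n + 1) + L + k) = R (shift^[N + (n + 1) + L] x) k) ∧
      ∀ x ∈ admissiblePrefix X n N, ∀ j < N + (n + 1), R x j = x j := by
  obtain ⟨L, hL⟩ := exists_splice hmix
  refine ⟨L, fun N => ?_⟩
  obtain ⟨b, hadm, hdep, hfix⟩ := exists_admissible_repair hX n N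
  set p := N + (n + 1)
  let IsSplice (x z : ℕ → α) : Prop := z ∈ markovApprox X n ∧ (∀ j < p, z j = b x j) ∧
    ∀ k < n + 1, z (p + L + k) = b (shift^[p + L] x) k
  have hsplice : DependsOn IsSplice (Set.Iio (p + L + p)) := fun x y h => by
    have hhead (j : ℕ) (hj : j < p) : b x j = b y j :=
      hdep j hj fun i (hi : i < p) => h i (show i < p + L + p by omega)
    have htail (k : ℕ) (hk : k < n + 1) : b (shift^[p + L] x) k = b (shift^[p + L] y) k :=
      hdep k (by omega) fun i (hi : i < p) => by
        simpa only [shift_iterate_apply] using h (p + L + i) (show p + L + i < p + L + p by omega)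
    funext z
    refine propext (and_congr_right' (and_congr (forall₂_congr fun j hj => ?_)
      (forall₂_congr fun k hk => ?_)))
    · rw [hhead j hj]
    · rw [htail k hk]
  obtain ⟨R, hRdep, hR⟩ := exists_choice_dependsOn hsplice fun x =>
    hL N _ (hadm x) _ (hadm (shift^[p + L] x) 0 N.zero_le)
  refine ⟨R, hRdep, fun x => (hR x).1, fun x k hk => ?_, fun x hx j hj => ?_⟩
  · rw [(hR x).2.2 k hk, (hR (shift^[p + L] x)).2.1 k (by omega)]
  · rw [(hR x).2.1 j hj, hfix x hx]

theorem exists_blockCode [Finite α] [TopologicalSpace α] [DiscreteTopology α] {n : ℕ}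
    (hX : X.Nonempty) (hmix : MixingShift (markovApprox X n)) :
    ∃ L, ∀ N, ∃ φ : (ℕ → α) → ℕ → α, Continuous φ ∧
      Function.Semiconj φ shift^[N + (n + 1) + L] shift^[N + (n + 1) + L] ∧
      (∀ x, φ x ∈ markovApprox X n) ∧
      ∀ x ∈ admissiblePrefix X n N, ∀ j < N + (n + 1), φ x j = x j := by
  obtain ⟨L, hL⟩ := exists_local_splice hX hmix
  refine ⟨L, fun N => ?_⟩
  obtain ⟨R, hdep, hmem, hoverlap, hprefix⟩ := hL N
  have hcont := (isLocallyConstant_of_dependsOn (Set.finite_Iio _) hdep).continuous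
  exact ⟨_, continuous_blockMap hcont, semiconj_blockMap (by omega),
    blockMap_mem_markovApprox (by omega) hmem hoverlap, fun x hx j hj =>
      (blockMap_apply_of_lt x (by omega)).trans (hprefix x hx j hj)⟩

end BlockCode

section Stability

variable {α : Type} [MeasurableSpace α] {X : Set (ℕ → α)} {ν : ProbabilityMeasure (ℕ → α)}

theorem measureReal_compl_eq_zero_of_mem_Msigma (hν : ν ∈ Msigma X) {F : Set (ℕ → α)}
    (hF : MeasurableSet F) (hXF : X ⊆ F) : (ν : Measure (ℕ → α)).real Fᶜ = 0 := by
  have hfull : ν F = 1 := le_antisymm (ν.apply_le_one F) (hν.2 ▸ ν.apply_mono hXF)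
  rw [probReal_compl_eq_one_sub hF]
  exact sub_eq_zero.2 (congrArg NNReal.toReal hfull).symm

theorem nonempty_of_mem_Msigma (hν : ν ∈ Msigma X) : X.Nonempty := by
  rw [Set.nonempty_iff_ne_empty]
  rintro rfl
  exact zero_ne_one (ν.coeFn_empty.symm.trans hν.2)

variable [MeasurableSingletonClass α]

theorem cesaro_map_graph_real_mismatch [Countable α] (ν : Measure (ℕ → α)) [IsFiniteMeasure ν]
    {φ : (ℕ → α) → ℕ → α} (hφ : Measurable φ) (m : ℕ) :
    (cesaro (Prod.map shift shift) (ν.map fun x => (φ x, x)) m).real (mismatch α) =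
      (m : ℝ)⁻¹ * ∑ k ∈ Finset.range m, ν.real {x | φ x k ≠ x k} := by
  have hS : Measurable (Prod.map shift shift : (ℕ → α) × (ℕ → α) → (ℕ → α) × (ℕ → α)) :=
    measurable_shift.prodMap measurable_shift
  rw [cesaro_real_apply hS _ m measurableSet_mismatch]
  refine congrArg _ (Finset.sum_congr rfl fun k _ => ?_)
  rw [map_measureReal_apply (by fun_prop) (hS.iterate k measurableSet_mismatch)]
  simp only [mismatch, Prod.map_iterate, Set.preimage_ofPred_eq, Prod.map_apply,
    shift_iterate_apply, Nat.add_zero]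

/- The joining is the Cesàro average of the graph measure of `φ`, which is only invariant under the
`m`-th power of the shift. -/
theorem exists_mem_Msigma_of_semiconj [Countable α] (hν : invariantPM ν)
    {φ : (ℕ → α) → ℕ → α} (hφ : Measurable φ) {m : ℕ} (hm : m ≠ 0)
    (hφm : Function.Semiconj φ shift^[m] shift^[m]) {Y : Set (ℕ → α)} (hY : MeasurableSet Y)
    (hshift : Set.MapsTo shift Y Y) (hφY : ∀ x, φ x ∈ Y) :
    ∃ μ ∈ Msigma Y, dbarM μ ν ≤
      (m : ℝ)⁻¹ * ∑ k ∈ Finset.range m, (ν : Measure (ℕ → α)).real {x | φ x k ≠ x k} := by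
  let S : (ℕ → α) × (ℕ → α) → (ℕ → α) × (ℕ → α) := Prod.map shift shift
  have hS : Measurable S := measurable_shift.prodMap measurable_shift
  let graph (x : ℕ → α) : (ℕ → α) × (ℕ → α) := (φ x, x)
  have hgraph : Measurable graph := hφ.prodMk measurable_id
  let γ : Measure ((ℕ → α) × (ℕ → α)) := (ν : Measure (ℕ → α)).map graph
  have : IsProbabilityMeasure γ := Measure.isProbabilityMeasure_map hgraph.aemeasurable
  have hsemi : Function.Semiconj graph shift^[m] S^[m] := fun x => by
    simp only [S, Prod.map_iterate, graph, hφm x, Prod.map_apply]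
  have hγ : MeasurePreserving S^[m] γ γ :=
    (hgraph.measurePreserving _).of_semiconj (hν.measurePreserving.iterate m) hsemi (hS.iterate m)
  have hξ := measurePreserving_cesaro hS hγ
  have := isProbabilityMeasure_cesaro hS γ hm
  have hμ := (measurable_fst.measurePreserving _).of_semiconj hξ (fun _ => rfl) measurable_shift
  have hsnd : (cesaro S γ m).map Prod.snd = ν := by
    rw [map_cesaro hS measurable_shift measurable_snd (fun _ => rfl),
      Measure.map_map measurable_snd hgraph]
    exact (congrArg (cesaro shift · m) Measure.map_id).trans
      (cesaro_eq_self hν.measurePreserving hm)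
  have hfull : (cesaro S γ m).map Prod.fst Y = 1 := by
    rw [Measure.map_apply measurable_fst hY]
    refine cesaro_apply_eq_of_forall hS γ hm (measurable_fst hY) fun k => ?_
    rw [Measure.map_apply hgraph (hS.iterate k (measurable_fst hY))]
    refine (congrArg _ (Set.eq_univ_of_forall fun x => ?_)).trans measure_univ
    simpa only [S, Prod.map_iterate] using! hshift.iterate k (hφY x)
  refine ⟨⟨_, Measure.isProbabilityMeasure_map measurable_fst.aemeasurable⟩,
    ⟨hμ.map_eq, congrArg ENNReal.toNNReal hfull⟩,
    (dbarM_le ⟨hξ.map_eq, rfl, hsnd⟩).trans_eq (cesaro_map_graph_real_mismatch _ hφ m)⟩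

theorem measureReal_compl_admissiblePrefix_le [Finite α] (hν : invariantPM ν) (X : Set (ℕ → α))
    (n N : ℕ) : (ν : Measure (ℕ → α)).real (admissiblePrefix X n N)ᶜ ≤
      (N + 1) * (ν : Measure (ℕ → α)).real (cylNbhd X (n + 1))ᶜ := by
  have hcover : (admissiblePrefix X n N)ᶜ ⊆
      ⋃ i ∈ Finset.range (N + 1), shift^[i] ⁻¹' (cylNbhd X (n + 1))ᶜ := fun x hx => by
    simpa [admissiblePrefix, Nat.lt_succ_iff] using hx
  have hinv (i : ℕ) : (ν : Measure (ℕ → α)).real (shift^[i] ⁻¹' (cylNbhd X (n + 1))ᶜ) =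
      (ν : Measure (ℕ → α)).real (cylNbhd X (n + 1))ᶜ :=
    (hν.measurePreserving.iterate i).measureReal_preimage
      (measurableSet_cylNbhd X (n + 1)).compl.nullMeasurableSet
  calc (ν : Measure (ℕ → α)).real (admissiblePrefix X n N)ᶜ
      ≤ ∑ i ∈ Finset.range (N + 1),
          (ν : Measure (ℕ → α)).real (shift^[i] ⁻¹' (cylNbhd X (n + 1))ᶜ) :=
        (measureReal_mono hcover (measure_ne_top _ _)).trans (measureReal_biUnion_finset_le _ _)
    _ = (N + 1) * (ν : Measure (ℕ → α)).real (cylNbhd X (n + 1))ᶜ := by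
        simp only [hinv, Finset.sum_const, Finset.card_range, nsmul_eq_mul, Nat.cast_succ]

theorem exists_mem_Msigma_markovApprox [Finite α] {n : ℕ} (hX : X.Nonempty)
    (hmix : MixingShift (markovApprox X n)) :
    ∃ L : ℕ, ∀ (N : ℕ) (ν : ProbabilityMeasure (ℕ → α)), invariantPM ν →
      ∃ μ ∈ Msigma (markovApprox X n), dbarM μ ν ≤
        (N + 1) * (ν : Measure (ℕ → α)).real (cylNbhd X (n + 1))ᶜ + L / (N + 1) := by
  let _ : TopologicalSpace α := ⊥
  have : DiscreteTopology α := ⟨rfl⟩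
  obtain ⟨L, hL⟩ := exists_blockCode hX hmix
  refine ⟨L, fun N ν hν => ?_⟩
  obtain ⟨φ, hφ, hφm, hφX, hprefix⟩ := hL N
  obtain ⟨μ, hμ, hle⟩ := exists_mem_Msigma_of_semiconj hν hφ.measurable (by omega) hφm
    (measurableSet_markovApprox X n) (fun _ => shift_mem_markovApprox) hφX
  refine ⟨μ, hμ, hle.trans ?_⟩
  set p := N + (n + 1)
  set d := (ν : Measure (ℕ → α)).real (cylNbhd X (n + 1))ᶜ
  have hhead (k : ℕ) (hk : k ∈ Finset.range p) :
      (ν : Measure (ℕ → α)).real {x | φ x k ≠ x k} ≤ (N + 1) * d :=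
    (measureReal_mono fun x (hx : φ x k ≠ x k) hadm =>
      hx (hprefix x hadm k (Finset.mem_range.1 hk))).trans
      (measureReal_compl_admissiblePrefix_le hν X n N)
  have hsum : ∑ k ∈ Finset.range (p + L), (ν : Measure (ℕ → α)).real {x | φ x k ≠ x k} ≤
      p * ((N + 1) * d) + L := by
    rw [Finset.sum_range_add]
    refine add_le_add ?_ ?_
    · simpa only [Finset.card_range, nsmul_eq_mul] using Finset.sum_le_card_nsmul _ _ _ hhead
    · simpa only [Finset.card_range, nsmul_eq_mul, mul_one] using
        Finset.sum_le_card_nsmul (Finset.range L) _ (1 : ℝ) fun _ _ => measureReal_le_one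
  have hp : (N + 1 : ℝ) ≤ (p + L : ℕ) := by
    exact_mod_cast (by omega : N + 1 ≤ p + L)
  calc ((p + L : ℕ) : ℝ)⁻¹ * ∑ k ∈ Finset.range (p + L),
        (ν : Measure (ℕ → α)).real {x | φ x k ≠ x k}
      ≤ ((p + L : ℕ) : ℝ)⁻¹ * ((p + L : ℕ) * ((N + 1) * d) + L) := by
        gcongr
        refine hsum.trans ?_
        gcongr
        omega
    _ = (N + 1) * d + L / (p + L : ℕ) := by
        rw [mul_add, inv_mul_cancel_left₀ (by positivity), inv_mul_eq_div]
    _ ≤ (N + 1) * d + L / (N + 1) := by gcongr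

theorem continuous_measureReal_of_isClopen {Ω : Type*} [TopologicalSpace Ω] [MeasurableSpace Ω]
    [OpensMeasurableSpace Ω] [HasOuterApproxClosed Ω] {F : Set Ω} (hF : IsClopen F) :
    Continuous fun ν : ProbabilityMeasure Ω => (ν : Measure Ω).real F :=
  NNReal.continuous_coe.comp <| continuous_iff_continuousAt.2 fun _ =>
    ProbabilityMeasure.tendsto_measure_of_isClopen_of_tendsto tendsto_id hF

theorem exists_isOpen_near_markovApprox [Finite α] [TopologicalSpace α] [DiscreteTopology α]
    {n : ℕ} (hX : X.Nonempty) (hmix : MixingShift (markovApprox X n)) {ε : ℝ} (hε : 0 < ε) :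
    ∃ U : Set (ProbabilityMeasure (ℕ → α)), IsOpen U ∧ Msigma X ⊆ U ∧
      ∀ ν ∈ U, invariantPM ν → ∃ μ ∈ Msigma (markovApprox X n), dbarM μ ν < ε := by
  obtain ⟨L, hL⟩ := exists_mem_Msigma_markovApprox hX hmix
  obtain ⟨N, hN⟩ := (((tendsto_const_div_atTop_nhds_zero_nat (L : ℝ)).comp
    (tendsto_add_atTop_nat 1)).eventually_lt_const hε).exists
  refine ⟨{ν | (N + 1) * (ν : Measure (ℕ → α)).real (cylNbhd X (n + 1))ᶜ + L / (N + 1) < ε},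
    isOpen_lt ?_ continuous_const, fun ν hν => ?_, fun ν hν hinv => ?_⟩
  · exact ((continuous_measureReal_of_isClopen
      (isClopen_cylNbhd X _).compl).const_mul _).add_const _
  · have hzero := measureReal_compl_eq_zero_of_mem_Msigma hν
      (measurableSet_cylNbhd X (n + 1)) (subset_cylNbhd X _)
    simpa only [Set.mem_ofPred_eq, hzero, mul_zero, zero_add, Function.comp_apply,
      Nat.cast_succ] using hN
  · obtain ⟨μ, hμ, hle⟩ := hL N ν hinv
    exact ⟨μ, hμ, hle.trans_lt hν⟩

end Stability

theorem statement5_general {α : Type} [Fintype α] [TopologicalSpace α] [DiscreteTopology α]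
    [MeasurableSpace α] [MeasurableSingletonClass α] (X : Set (ℕ → α))
    (h : ∀ ε : ℝ, 0 < ε → ∃ n, MixingShift (markovApprox X n) ∧
      hausdist dbarM (Msigma (markovApprox X n)) (Msigma X) < ε) : DbarMStable X := by
  intro ε hε
  rcases (Msigma X).eq_empty_or_nonempty with hempty | hne
  · exact ⟨∅, isOpen_empty, hempty.le, fun _ hν => hν.elim⟩
  obtain ⟨n, hmix, hdist⟩ := h (ε / 2) (half_pos hε)
  obtain ⟨U, hU, hXU, hnear⟩ := exists_isOpen_near_markovApprox
    (hne.elim fun _ hμ => nonempty_of_mem_Msigma hμ) hmix (half_pos hε)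
  refine ⟨U, hU, hXU, fun ν hν hinv => ?_⟩
  obtain ⟨ρ, hρ, hρν⟩ := hnear ν hν hinv
  obtain ⟨μ, hμ, hρμ⟩ := exists_lt_of_hausdist_lt hne
    (fun _ hp _ hq => ⟨dbarM_nonneg _ _, dbarM_le_one hp.1 hq.1⟩) hdist hρ
  refine ⟨μ, hμ, (dbarM_triangle hμ.1 hρ.1 hinv).trans_lt ?_⟩
  rw [dbarM_comm μ ρ]
  linarith

/-- chain mixing together with `d̄_M^H`-convergence of the simplices of the
Markov approximations implies `d̄_M`-stability. -/
theorem statement5 (hA : 2 ≤ Fintype.card A) (X : Set (ℕ → A)) (hX : ShiftSpace X)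
    (hcm : ChainMixing X)
    (hconv : Filter.Tendsto (fun n => hausdist dbarM (Msigma (markovApprox X n)) (Msigma X))
      Filter.atTop (nhds 0)) :
    DbarMStable X :=
  statement5_general X fun _ hε =>
    ((eventually_atTop.2 hcm).and (hconv.eventually_lt_const hε)).exists

end DbarPaper
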